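/- Let d ≥ 1 and T > 0, let ν be a compactly supported Borel probability measure on ℝ^d, and let g, r : [0,T] → ℝ be continuously differentiable with r(t) > 0 for all t. Define ρ(t,x) = (2π r(t)²)^(−d/2) ∫ exp(−‖x − g(t)·x*‖²/(2r(t)²)) dν(x*), the posterior mean m(t,x) = (∫ x* exp(−‖x − g(t)·x*‖²/(2r(t)²)) dν(x*)) / (∫ exp(−‖x − g(t)·x*‖²/(2r(t)²)) dν(x*)), the score s(t,x) = ∇_x log ρ(t,x), and the drift b(t,x) = ġ(t)·m(t,x) − r(t)·ṙ(t)·s(t,x). Then ρ is continuously differentiable in t, b(t,·)·ρ(t,·) is continuously differentiable in x, and the continuity equation ∂_t ρ(t,x) + div_x( b(t,·) ρ(t,·) )(x) = 0 holds for every (t,x) ∈ [0,T] × ℝ^d. -/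

import Mathlib

open MeasureTheory Real
open scoped RealInnerProductSpace

/-- The divergence of a vector field `F : ℝ^d → ℝ^d`. -/
noncomputable def diverg {d : ℕ} (F : EuclideanSpace ℝ (Fin d) → EuclideanSpace ℝ (Fin d))
    (x : EuclideanSpace ℝ (Fin d)) : ℝ :=
  ∑ i, fderiv ℝ F x (EuclideanSpace.single i 1) i

/-!
Up to the normalising constant `c = (2πr²)^(-d/2)`, the density is `M`, the average over `x' ~ ν` of
the Gaussian kernel of width `r` centred at `g x'`. Let `V` be the same average weighted by `x'`.
Then `ρ m = c V` and `ρ s = c ∇M`, so the flux `ρ b` is `c (ġ V - r ṙ ∇M)`, in which no quotient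
is left. Moving the centre, `∂_g M = -div V` (transport equation); this and the scaling relation
`r ∂_r M = -(x · ∇M - g div V)` hold for any kernel. What is special to the Gaussian is Tweedie's
formula `r² ∇M = -(M x - g V)`: its divergence turns the scaling relation into the heat equation
`∂_r (c M) = c r ΔM`. The continuity equation is the chain rule for `(g, r)`.
-/

theorem contDiffOn_one_of_hasDerivWithinAt {𝕜 F : Type*} [NontriviallyNormedField 𝕜]
    [NormedAddCommGroup F] [NormedSpace 𝕜 F] {I : Set 𝕜} {f f' : 𝕜 → F} (hI : UniqueDiffOn 𝕜 I)
    (hf : ∀ t ∈ I, HasDerivWithinAt f (f' t) I t) (hf' : ContinuousOn f' I) :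
    ContDiffOn 𝕜 1 f I :=
  (contDiffOn_one_iff_derivWithin hI).2 ⟨fun t ht => (hf t ht).differentiableWithinAt,
    hf'.congr fun t ht => (hf t ht).derivWithin (hI t ht)⟩

theorem hasDerivWithinAt_const_mul_sq_rpow {I : Set ℝ} {r : ℝ → ℝ} {r' t a : ℝ} (p : ℝ)
    (ha : a ≠ 0) (hr : HasDerivWithinAt r r' I t) (hr0 : r t ≠ 0) :
    HasDerivWithinAt (fun τ => (a * r τ ^ 2) ^ p) (2 * p * r' / r t * (a * r t ^ 2) ^ p) I t := by
  have hne : a * r t ^ 2 ≠ 0 := mul_ne_zero ha (pow_ne_zero 2 hr0)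
  refine (((hr.fun_pow 2).const_mul a).rpow_const (p := p) (Or.inl hne)).congr_deriv ?_
  rw [rpow_sub_one hne]
  push_cast
  field_simp

theorem integrable_of_continuous_of_compact_support {X F : Type*} [TopologicalSpace X]
    [MeasurableSpace X] [OpensMeasurableSpace X] [T2Space X] [NormedAddCommGroup F]
    {μ : Measure X} [IsFiniteMeasureOnCompacts μ]
    (hμ : ∃ K : Set X, IsCompact K ∧ μ Kᶜ = 0) {f : X → F} (hf : Continuous f) :
    Integrable f μ := by
  obtain ⟨K, hK, hμK⟩ := hμ
  rw [← Measure.restrict_eq_self_of_ae_mem (mem_ae_iff.2 hμK)]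
  exact hf.continuousOn.integrableOn_compact hK

section Gradient

variable {E : Type*} [NormedAddCommGroup E] [InnerProductSpace ℝ E] [CompleteSpace E]
  {f : E → ℝ} {x : E}

theorem smul_gradient_log (hf : DifferentiableAt ℝ f x) (hx : f x ≠ 0) :
    f x • gradient (fun y => log (f y)) x = gradient f x := by
  rw [gradient, gradient, fderiv.log hf hx, map_smul, smul_inv_smul₀ hx]

theorem gradient_const_mul (hf : DifferentiableAt ℝ f x) (a : ℝ) :
    gradient (fun y => a * f y) x = a • gradient f x := by
  rw [gradient, gradient, fderiv_const_mul hf, map_smul]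

end Gradient

section Divergence

variable {E : Type*} [NormedAddCommGroup E] [NormedSpace ℝ E] {F H : E → E} {f : E → ℝ} {x : E}

/-- The divergence of a vector field on a finite-dimensional space, defined without reference to a
basis as the trace of the derivative. -/
noncomputable def divergence (F : E → E) (x : E) : ℝ :=
  LinearMap.trace ℝ E (fderiv ℝ F x)

theorem divergence_sub (hF : DifferentiableAt ℝ F x) (hH : DifferentiableAt ℝ H x) :
    divergence (fun y => F y - H y) x = divergence F x - divergence H x := by
  simp only [divergence, fderiv_fun_sub hF hH, ContinuousLinearMap.toLinearMap_sub, map_sub]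

theorem divergence_const_smul (hF : DifferentiableAt ℝ F x) (a : ℝ) :
    divergence (fun y => a • F y) x = a * divergence F x := by
  simp only [divergence, fderiv_fun_const_smul hF, ContinuousLinearMap.toLinearMap_smul, map_smul,
    smul_eq_mul]

theorem divergence_smul_self [FiniteDimensional ℝ E] (hf : DifferentiableAt ℝ f x) :
    divergence (fun y => f y • y) x = Module.finrank ℝ E * f x + fderiv ℝ f x x := by
  have hfderiv : (fderiv ℝ (fun y => f y • y) x : E →ₗ[ℝ] E) =
      f x • LinearMap.id + (fderiv ℝ f x : E →ₗ[ℝ] ℝ).smulRight x := by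
    rw [fderiv_fun_smul hf differentiableAt_fun_id, fderiv_fun_id]
    rfl
  rw [divergence, hfderiv, map_add, map_smul, LinearMap.trace_id, LinearMap.trace_smulRight,
    smul_eq_mul, mul_comm, ContinuousLinearMap.coe_coe]

theorem diverg_eq_divergence {d : ℕ} (F : EuclideanSpace ℝ (Fin d) → EuclideanSpace ℝ (Fin d))
    (x : EuclideanSpace ℝ (Fin d)) : diverg F x = divergence F x := by
  rw [divergence, LinearMap.trace_eq_sum_inner _ (EuclideanSpace.basisFun (Fin d) ℝ)]
  simp [diverg, EuclideanSpace.inner_single_left]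

end Divergence

/-- A continuously differentiable kernel that is bounded together with its derivative. Such kernels
may be integrated against any finite measure with a first moment. -/
structure BoundedC1 {E : Type*} [NormedAddCommGroup E] [NormedSpace ℝ E] (ψ : E → ℝ) : Prop where
  contDiff : ContDiff ℝ 1 ψ
  exists_norm_le : ∃ C, ∀ u, ‖ψ u‖ ≤ C
  exists_norm_fderiv_le : ∃ C, ∀ u, ‖fderiv ℝ ψ u‖ ≤ C

namespace BoundedC1

section ParametricIntegral

variable {X P E G : Type*}
  [NormedAddCommGroup P] [NormedSpace ℝ P] [NormedAddCommGroup E] [NormedSpace ℝ E]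
  [NormedAddCommGroup G] [NormedSpace ℝ G]
  {ψ : E → ℝ} {c : X → E} {L : X → P →L[ℝ] E} {h : X → G}

theorem hasFDerivAt_comp_smul (hψ : BoundedC1 ψ) (x : X) (p : P) :
    HasFDerivAt (fun q => ψ (c x + L x q) • h x)
      ((fderiv ℝ ψ (c x + L x p) ∘L L x).smulRight (h x)) p :=
  ((hψ.contDiff.differentiable one_ne_zero _).hasFDerivAt.comp p
    ((L x).hasFDerivAt.const_add _)).smul_const (h x)

theorem exists_norm_fderiv_comp_smul_le (hψ : BoundedC1 ψ) :
    ∃ C, ∀ p x, ‖(fderiv ℝ ψ (c x + L x p) ∘L L x).smulRight (h x)‖ ≤ C * (‖L x‖ * ‖h x‖) := by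
  obtain ⟨C, hC⟩ := hψ.exists_norm_fderiv_le
  refine ⟨C, fun p x => ?_⟩
  calc ‖(fderiv ℝ ψ (c x + L x p) ∘L L x).smulRight (h x)‖
      = ‖fderiv ℝ ψ (c x + L x p) ∘L L x‖ * ‖h x‖ := ContinuousLinearMap.norm_smulRight_apply _ _
    _ ≤ ‖fderiv ℝ ψ (c x + L x p)‖ * ‖L x‖ * ‖h x‖ := by
      gcongr; exact ContinuousLinearMap.opNorm_comp_le _ _
    _ ≤ C * ‖L x‖ * ‖h x‖ := by gcongr; exact hC _
    _ = C * (‖L x‖ * ‖h x‖) := mul_assoc _ _ _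

variable [MeasurableSpace X] {μ : Measure X}

theorem integrable_comp_smul (hψ : BoundedC1 ψ) (hc : AEStronglyMeasurable c μ)
    (hh : Integrable h μ) : Integrable (fun x => ψ (c x) • h x) μ := by
  obtain ⟨C, hC⟩ := hψ.exists_norm_le
  exact hh.bdd_smul C (hψ.contDiff.continuous.comp_aestronglyMeasurable hc)
    (.of_forall fun _ => hC _)

theorem aestronglyMeasurable_fderiv_comp_smul (hψ : BoundedC1 ψ) (hc : AEStronglyMeasurable c μ)
    (hL : AEStronglyMeasurable L μ) (hh : AEStronglyMeasurable h μ) (p : P) :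
    AEStronglyMeasurable (fun x => (fderiv ℝ ψ (c x + L x p) ∘L L x).smulRight (h x)) μ := by
  have hψ' : AEStronglyMeasurable (fun x => fderiv ℝ ψ (c x + L x p)) μ :=
    (hψ.contDiff.continuous_fderiv one_ne_zero).comp_aestronglyMeasurable
      (hc.add (hL.apply_continuousLinearMap p))
  have hψ'L := (ContinuousLinearMap.compL ℝ P E ℝ).aestronglyMeasurable_comp₂ hψ' hL
  exact (ContinuousLinearMap.smulRightL ℝ P G).aestronglyMeasurable_comp₂ hψ'L hh

theorem integrable_fderiv_comp_smul (hψ : BoundedC1 ψ) (hc : AEStronglyMeasurable c μ)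
    (hL : AEStronglyMeasurable L μ) (hh : AEStronglyMeasurable h μ)
    (hLh : Integrable (fun x => ‖L x‖ * ‖h x‖) μ) (p : P) :
    Integrable (fun x => (fderiv ℝ ψ (c x + L x p) ∘L L x).smulRight (h x)) μ := by
  obtain ⟨C, hC⟩ := hψ.exists_norm_fderiv_comp_smul_le (c := c) (L := L) (h := h)
  exact (hLh.const_mul C).mono' (hψ.aestronglyMeasurable_fderiv_comp_smul hc hL hh p)
    (.of_forall (hC p))

theorem hasFDerivAt_integral_comp_smul (hψ : BoundedC1 ψ) (hc : AEStronglyMeasurable c μ)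
    (hL : AEStronglyMeasurable L μ) (hh : Integrable h μ)
    (hLh : Integrable (fun x => ‖L x‖ * ‖h x‖) μ) (p : P) :
    HasFDerivAt (fun q => ∫ x, ψ (c x + L x q) • h x ∂μ)
      (∫ x, (fderiv ℝ ψ (c x + L x p) ∘L L x).smulRight (h x) ∂μ) p := by
  obtain ⟨C, hC⟩ := hψ.exists_norm_fderiv_comp_smul_le (c := c) (L := L) (h := h)
  have hint (q : P) : Integrable (fun x => ψ (c x + L x q) • h x) μ :=
    hψ.integrable_comp_smul (hc.add (hL.apply_continuousLinearMap q)) hh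
  exact hasFDerivAt_integral_of_dominated_of_fderiv_le Filter.univ_mem
    (.of_forall fun q => (hint q).aestronglyMeasurable) (hint p)
    (hψ.aestronglyMeasurable_fderiv_comp_smul hc hL hh.aestronglyMeasurable p)
    (.of_forall fun x q _ => hC q x) (hLh.const_mul C)
    (.of_forall fun x q _ => hψ.hasFDerivAt_comp_smul x q)

theorem contDiff_integral_comp_smul (hψ : BoundedC1 ψ) (hc : AEStronglyMeasurable c μ)
    (hL : AEStronglyMeasurable L μ) (hh : Integrable h μ)
    (hLh : Integrable (fun x => ‖L x‖ * ‖h x‖) μ) :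
    ContDiff ℝ 1 (fun q => ∫ x, ψ (c x + L x q) • h x ∂μ) := by
  refine contDiff_one_iff_hasFDerivAt.2
    ⟨_, ?_, hψ.hasFDerivAt_integral_comp_smul hc hL hh hLh⟩
  obtain ⟨C, hC⟩ := hψ.exists_norm_fderiv_comp_smul_le (c := c) (L := L) (h := h)
  refine continuous_of_dominated
    (hψ.aestronglyMeasurable_fderiv_comp_smul hc hL hh.aestronglyMeasurable)
    (fun p => .of_forall (hC p)) (hLh.const_mul C) (.of_forall fun x => ?_)
  have := hψ.contDiff.continuous_fderiv one_ne_zero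
  fun_prop

theorem fderiv_integral_comp_smul_apply (hψ : BoundedC1 ψ)
    (hc : AEStronglyMeasurable c μ) (hL : AEStronglyMeasurable L μ) (hh : Integrable h μ)
    (hLh : Integrable (fun x => ‖L x‖ * ‖h x‖) μ) (p v : P) :
    fderiv ℝ (fun q => ∫ x, ψ (c x + L x q) • h x ∂μ) p v =
      ∫ x, fderiv ℝ ψ (c x + L x p) (L x v) • h x ∂μ := by
  rw [(hψ.hasFDerivAt_integral_comp_smul hc hL hh hLh p).fderiv, ContinuousLinearMap.integral_apply
    (hψ.integrable_fderiv_comp_smul hc hL hh.aestronglyMeasurable hLh p)]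
  rfl

theorem integrable_fderiv_apply (hψ : BoundedC1 ψ) {v : X → E} (hc : AEStronglyMeasurable c μ)
    (hv : Integrable v μ) : Integrable (fun x => fderiv ℝ ψ (c x) (v x)) μ := by
  obtain ⟨C, hC⟩ := hψ.exists_norm_fderiv_le
  have hψ' : AEStronglyMeasurable (fun x => fderiv ℝ ψ (c x)) μ :=
    (hψ.contDiff.continuous_fderiv one_ne_zero).comp_aestronglyMeasurable hc
  exact (hv.norm.const_mul C).mono'
    ((ContinuousLinearMap.id ℝ (E →L[ℝ] ℝ)).aestronglyMeasurable_comp₂ hψ' hv.aestronglyMeasurable)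
    (.of_forall fun x => (fderiv ℝ ψ (c x)).le_of_opNorm_le (hC _) _)

theorem divergence_integral_comp_smul [FiniteDimensional ℝ P] {h : X → P} (hψ : BoundedC1 ψ)
    (hc : AEStronglyMeasurable c μ) (hL : AEStronglyMeasurable L μ) (hh : Integrable h μ)
    (hLh : Integrable (fun x => ‖L x‖ * ‖h x‖) μ) (p : P) :
    divergence (fun q => ∫ x, ψ (c x + L x q) • h x ∂μ) p =
      ∫ x, fderiv ℝ ψ (c x + L x p) (L x (h x)) ∂μ := by
  let trace : (P →L[ℝ] P) →L[ℝ] ℝ :=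
    (LinearMap.trace ℝ P ∘ₗ ContinuousLinearMap.coeLM ℝ).toContinuousLinearMap
  calc divergence (fun q => ∫ x, ψ (c x + L x q) • h x ∂μ) p
      = trace (∫ x, (fderiv ℝ ψ (c x + L x p) ∘L L x).smulRight (h x) ∂μ) := by
        rw [divergence, (hψ.hasFDerivAt_integral_comp_smul hc hL hh hLh p).fderiv]
        rfl
    _ = ∫ x, trace ((fderiv ℝ ψ (c x + L x p) ∘L L x).smulRight (h x)) ∂μ :=
        (trace.integral_comp_comm
          (hψ.integrable_fderiv_comp_smul hc hL hh.aestronglyMeasurable hLh p)).symm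
    _ = ∫ x, fderiv ℝ ψ (c x + L x p) (L x (h x)) ∂μ :=
        integral_congr_ae (.of_forall fun x => LinearMap.trace_smulRight _ _)

end ParametricIntegral

end BoundedC1

section Smoothing

variable {E G : Type*} [NormedAddCommGroup E] [NormedSpace ℝ E]
  [NormedAddCommGroup G] [NormedSpace ℝ G]

theorem affine_eq_inv_smul_sub (γ R : ℝ) (x x' : E) :
    -(R⁻¹ * γ) • x' + (R⁻¹ • ContinuousLinearMap.id ℝ E) x = R⁻¹ • (x - γ • x') := by
  simp only [smul_apply, ContinuousLinearMap.id_apply]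
  module

/-- The argument `α x - η x'` of a kernel of inverse width `α` and centre `η x' / α`, as a linear
function of the parameters `(α, η)`. -/
noncomputable def scalingMap (x x' : E) : ℝ × ℝ →L[ℝ] E :=
  (ContinuousLinearMap.fst ℝ ℝ ℝ).smulRight x - (ContinuousLinearMap.snd ℝ ℝ ℝ).smulRight x'

theorem scalingMap_apply (x x' : E) (p : ℝ × ℝ) : scalingMap x x' p = p.1 • x - p.2 • x' := rfl

variable [MeasurableSpace E] {ν : Measure E} {ψ : E → ℝ} {h : E → G} {γ R : ℝ}

/-- The `h`-weighted average over `x' ~ ν` of the kernel `ψ` of width `R` centred at `γ x'`. Up to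
normalisation, `h = 1` gives the density of `γ x' + R z`, where `z` has density `ψ`, and the ratio
of the averages for `h = id` and `h = 1` is the posterior mean of `x'`. -/
noncomputable def smoothing (ψ : E → ℝ) (ν : Measure E) (γ R : ℝ) (h : E → G) (x : E) : G :=
  ∫ x', ψ (R⁻¹ • (x - γ • x')) • h x' ∂ν

theorem smoothing_eq_integral_affine (ψ : E → ℝ) (ν : Measure E) (γ R : ℝ) (h : E → G) :
    smoothing ψ ν γ R h = fun x =>
      ∫ x', ψ (-(R⁻¹ * γ) • x' + (R⁻¹ • ContinuousLinearMap.id ℝ E) x) • h x' ∂ν := by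
  simp only [affine_eq_inv_smul_sub]
  rfl

theorem smoothing_one_eq_integral_scalingMap (ψ : E → ℝ) (ν : Measure E) (γ R : ℝ) (x : E) :
    smoothing ψ ν γ R (1 : E → ℝ) x =
      ∫ x', ψ (0 + scalingMap x x' (R⁻¹, R⁻¹ * γ)) • (1 : ℝ) ∂ν := by
  simp only [smoothing, scalingMap_apply, smul_sub, smul_smul, zero_add, Pi.one_apply]

theorem integrable_scalingMap [IsFiniteMeasure ν] (hν : Integrable id ν) (x : E) :
    Integrable (scalingMap x) ν :=
  (integrable_const _).sub
    ((ContinuousLinearMap.smulRightL ℝ (ℝ × ℝ) E (.snd ℝ ℝ ℝ)).integrable_comp hν)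

section Time

variable [IsFiniteMeasure ν] {I : Set ℝ} {g r : ℝ → ℝ} {t g' r' : ℝ}

namespace BoundedC1

theorem contDiffOn_smoothing_one (hψ : BoundedC1 ψ) (hν : Integrable id ν)
    (hg : ContDiffOn ℝ 1 g I) (hr : ContDiffOn ℝ 1 r I) (hr0 : ∀ t ∈ I, r t ≠ 0) (x : E) :
    ContDiffOn ℝ 1 (fun t => smoothing ψ ν (g t) (r t) (1 : E → ℝ) x) I := by
  have hL := integrable_scalingMap hν x
  simp only [smoothing_one_eq_integral_scalingMap]
  exact (hψ.contDiff_integral_comp_smul aestronglyMeasurable_const hL.aestronglyMeasurable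
    (integrable_const 1) (hL.norm.mul_const _)).comp_contDiffOn
    ((hr.inv hr0).prodMk ((hr.inv hr0).mul hg))

theorem hasDerivWithinAt_smoothing_one_integral (hψ : BoundedC1 ψ) (hν : Integrable id ν)
    (hg : HasDerivWithinAt g g' I t) (hr : HasDerivWithinAt r r' I t) (hr0 : r t ≠ 0) (x : E) :
    HasDerivWithinAt (fun τ => smoothing ψ ν (g τ) (r τ) (1 : E → ℝ) x)
      (∫ x', fderiv ℝ ψ ((r t)⁻¹ • (x - g t • x'))
        (-(r' / r t) • (r t)⁻¹ • (x - g t • x') - g' • (r t)⁻¹ • x') ∂ν) I t := by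
  have hL := integrable_scalingMap hν x
  have hΦ := hψ.hasFDerivAt_integral_comp_smul (c := 0) aestronglyMeasurable_const
    hL.aestronglyMeasurable (integrable_const (1 : ℝ)) (hL.norm.mul_const _)
  have hp := (hr.fun_inv hr0).prodMk ((hr.fun_inv hr0).fun_mul hg)
  simp only [smoothing_one_eq_integral_scalingMap]
  refine ((hΦ _).comp_hasDerivWithinAt t hp).congr_deriv ?_
  rw [← (hΦ _).fderiv, hψ.fderiv_integral_comp_smul_apply (c := 0) aestronglyMeasurable_const
    hL.aestronglyMeasurable (integrable_const (1 : ℝ)) (hL.norm.mul_const _)]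
  refine integral_congr_ae (.of_forall fun x' => ?_)
  have hu : scalingMap x x' ((r t)⁻¹, (r t)⁻¹ * g t) = (r t)⁻¹ • (x - g t • x') := by
    rw [scalingMap_apply]
    module
  have hvel : scalingMap x x' (-r' / r t ^ 2, -r' / r t ^ 2 * g t + (r t)⁻¹ * g') =
      -(r' / r t) • (r t)⁻¹ • (x - g t • x') - g' • (r t)⁻¹ • x' := by
    rw [scalingMap_apply]
    module
  simp only [Pi.zero_apply, zero_add, hu, hvel, smul_eq_mul, mul_one]

end BoundedC1

end Time

variable [BorelSpace E]

namespace BoundedC1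

theorem contDiff_smoothing [SecondCountableTopology E] (hψ : BoundedC1 ψ) (hh : Integrable h ν) :
    ContDiff ℝ 1 (smoothing ψ ν γ R h) := by
  rw [smoothing_eq_integral_affine]
  exact hψ.contDiff_integral_comp_smul (by fun_prop) aestronglyMeasurable_const hh
    (hh.norm.const_mul _)

theorem fderiv_smoothing_apply [SecondCountableTopology E] (hψ : BoundedC1 ψ)
    (hh : Integrable h ν) (x v : E) :
    fderiv ℝ (smoothing ψ ν γ R h) x v =
      ∫ x', fderiv ℝ ψ (R⁻¹ • (x - γ • x')) (R⁻¹ • v) • h x' ∂ν := by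
  rw [smoothing_eq_integral_affine, hψ.fderiv_integral_comp_smul_apply (by fun_prop)
    aestronglyMeasurable_const hh (hh.norm.const_mul _)]
  simp only [← affine_eq_inv_smul_sub, smul_apply, ContinuousLinearMap.id_apply]

variable [FiniteDimensional ℝ E]

theorem divergence_smoothing_id (hψ : BoundedC1 ψ) (hν : Integrable id ν) (x : E) :
    divergence (smoothing ψ ν γ R id) x =
      ∫ x', fderiv ℝ ψ (R⁻¹ • (x - γ • x')) (R⁻¹ • x') ∂ν := by
  rw [smoothing_eq_integral_affine, hψ.divergence_integral_comp_smul (by fun_prop)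
    aestronglyMeasurable_const hν (hν.norm.const_mul _)]
  simp only [← affine_eq_inv_smul_sub, smul_apply, ContinuousLinearMap.id_apply, id_eq]

/-- Transport equation in the centre `γ`, and Euler's identity for homogeneous functions in the
width `R`. -/
theorem hasDerivWithinAt_smoothing_one [IsFiniteMeasure ν] {I : Set ℝ} {g r : ℝ → ℝ}
    {t g' r' : ℝ} (hψ : BoundedC1 ψ) (hν : Integrable id ν)
    (hg : HasDerivWithinAt g g' I t) (hr : HasDerivWithinAt r r' I t) (hr0 : r t ≠ 0) (x : E) :
    HasDerivWithinAt (fun τ => smoothing ψ ν (g τ) (r τ) (1 : E → ℝ) x)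
      (-g' * divergence (smoothing ψ ν (g t) (r t) id) x -
        r' / r t * (fderiv ℝ (smoothing ψ ν (g t) (r t) (1 : E → ℝ)) x x -
          g t * divergence (smoothing ψ ν (g t) (r t) id) x)) I t := by
  refine (hψ.hasDerivWithinAt_smoothing_one_integral hν hg hr hr0 x).congr_deriv ?_
  let D : E → E →L[ℝ] ℝ := fun x' => fderiv ℝ ψ ((r t)⁻¹ • (x - g t • x'))
  have hD {v : E → E} (hv : Integrable v ν) : Integrable (fun x' => D x' (v x')) ν :=
    hψ.integrable_fderiv_apply (by fun_prop) hv
  have hdiv : divergence (smoothing ψ ν (g t) (r t) id) x = ∫ x', D x' ((r t)⁻¹ • x') ∂ν :=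
    hψ.divergence_smoothing_id hν x
  have hradial : fderiv ℝ (smoothing ψ ν (g t) (r t) (1 : E → ℝ)) x x =
      ∫ x', D x' ((r t)⁻¹ • x) ∂ν := by
    simp only [hψ.fderiv_smoothing_apply (h := (1 : E → ℝ)) (integrable_const 1), Pi.one_apply,
      smul_eq_mul, mul_one, D]
  calc ∫ x', D x' (-(r' / r t) • (r t)⁻¹ • (x - g t • x') - g' • (r t)⁻¹ • x') ∂ν
      = ∫ x', ((r' / r t * g t - g') * D x' ((r t)⁻¹ • x') -
          r' / r t * D x' ((r t)⁻¹ • x)) ∂ν :=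
        integral_congr_ae (.of_forall fun x' => by
          simp only [smul_sub, map_sub, map_smul, smul_eq_mul]
          ring)
    _ = (r' / r t * g t - g') * divergence (smoothing ψ ν (g t) (r t) id) x -
          r' / r t * fderiv ℝ (smoothing ψ ν (g t) (r t) (1 : E → ℝ)) x x := by
        rw [integral_sub ((hD (v := fun x' => (r t)⁻¹ • x') (hν.smul _)).const_mul _)
          ((hD (integrable_const _)).const_mul _), integral_const_mul, integral_const_mul,
          hdiv, hradial]
    _ = _ := by ring

end BoundedC1

end Smoothing

section Gaussian

variable {E : Type*} [NormedAddCommGroup E]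

/-- The unnormalised standard Gaussian kernel. -/
noncomputable def gaussianKernel (u : E) : ℝ :=
  exp (-‖u‖ ^ 2 / 2)

theorem norm_mul_gaussianKernel_le_one (u : E) : ‖u‖ * gaussianKernel u ≤ 1 := by
  rw [gaussianKernel, neg_div, exp_neg, ← div_eq_mul_inv, div_le_one (exp_pos _)]
  nlinarith [add_one_le_exp (‖u‖ ^ 2 / 2), sq_nonneg (‖u‖ - 1)]

variable [InnerProductSpace ℝ E]

theorem gaussianKernel_inv_smul (R : ℝ) (u : E) :
    gaussianKernel (R⁻¹ • u) = exp (-‖u‖ ^ 2 / (2 * R ^ 2)) := by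
  rw [gaussianKernel, norm_smul, mul_pow, norm_inv, inv_pow, norm_eq_abs, sq_abs]
  congr 1
  ring

theorem hasFDerivAt_gaussianKernel (u : E) :
    HasFDerivAt gaussianKernel (-gaussianKernel u • innerSL ℝ u) u := by
  have hexponent : HasFDerivAt (fun v : E => -‖v‖ ^ 2 / 2) (-innerSL ℝ u) u := by
    have h := ((hasStrictFDerivAt_norm_sq u).hasFDerivAt.fun_neg).mul_const (2⁻¹ : ℝ)
    simp only [← div_eq_mul_inv] at h
    refine h.congr_fderiv ?_
    module
  refine hexponent.exp.congr_fderiv ?_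
  rw [smul_neg, neg_smul, gaussianKernel]

theorem boundedC1_gaussianKernel : BoundedC1 (gaussianKernel : E → ℝ) where
  contDiff := ((contDiff_norm_sq ℝ).neg.div_const 2).exp
  exists_norm_le := ⟨1, fun u => by
    rw [gaussianKernel, norm_of_nonneg (exp_pos _).le, exp_le_one_iff]
    nlinarith [sq_nonneg ‖u‖]⟩
  exists_norm_fderiv_le := ⟨1, fun u => by
    rw [(hasFDerivAt_gaussianKernel u).fderiv, norm_smul, norm_neg, innerSL_apply_norm,
      gaussianKernel, norm_of_nonneg (exp_pos _).le, mul_comm]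
    exact norm_mul_gaussianKernel_le_one u⟩

variable [FiniteDimensional ℝ E] [MeasurableSpace E] [BorelSpace E]
  {ν : Measure E} {γ R : ℝ}

theorem contDiff_smoothing_gaussianKernel_id (hν : Integrable id ν) :
    ContDiff ℝ 1 (smoothing gaussianKernel ν γ R id) :=
  boundedC1_gaussianKernel.contDiff_smoothing hν

variable [IsFiniteMeasure ν]

theorem contDiff_smoothing_gaussianKernel_one :
    ContDiff ℝ 1 (smoothing gaussianKernel ν γ R (1 : E → ℝ)) :=
  boundedC1_gaussianKernel.contDiff_smoothing (integrable_const 1)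

theorem smoothing_gaussianKernel_one_pos [NeZero ν] (x : E) :
    0 < smoothing gaussianKernel ν γ R (1 : E → ℝ) x := by
  have hint : Integrable (fun x' => gaussianKernel (R⁻¹ • (x - γ • x')) • (1 : ℝ)) ν :=
    boundedC1_gaussianKernel.integrable_comp_smul (by fun_prop) (integrable_const 1)
  simp only [gaussianKernel, smul_eq_mul, mul_one] at hint
  simpa only [smoothing, gaussianKernel, Pi.one_apply, smul_eq_mul, mul_one]
    using integral_exp_pos hint

/-- Tweedie's formula, before division by the mass. -/
theorem gradient_smoothing_gaussianKernel_one (hν : Integrable id ν) (x : E) :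
    gradient (smoothing gaussianKernel ν γ R (1 : E → ℝ)) x =
      -(R ^ 2)⁻¹ • (smoothing gaussianKernel ν γ R (1 : E → ℝ) x • x -
        γ • smoothing gaussianKernel ν γ R id x) := by
  refine ext_inner_left ℝ fun v => ?_
  let w : E → ℝ := fun x' => gaussianKernel (R⁻¹ • (x - γ • x'))
  have hw : Integrable (fun x' => w x' • (1 : ℝ)) ν :=
    boundedC1_gaussianKernel.integrable_comp_smul (by fun_prop) (integrable_const 1)
  have hwid : Integrable (fun x' => w x' • x') ν :=
    boundedC1_gaussianKernel.integrable_comp_smul (by fun_prop) hν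
  have hwinner : Integrable (fun x' => ⟪v, w x' • x'⟫) ν := hwid.const_inner v
  calc ⟪v, gradient (smoothing gaussianKernel ν γ R (1 : E → ℝ)) x⟫
      = ∫ x', fderiv ℝ gaussianKernel (R⁻¹ • (x - γ • x')) (R⁻¹ • v) • (1 : ℝ) ∂ν := by
        rw [inner_gradient_right, conj_trivial]
        exact boundedC1_gaussianKernel.fderiv_smoothing_apply (integrable_const 1) x v
    _ = ∫ x', -(R ^ 2)⁻¹ * (⟪v, x⟫ * w x' • (1 : ℝ) - γ * ⟪v, w x' • x'⟫) ∂ν := by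
        refine integral_congr_ae (.of_forall fun x' => ?_)
        simp only [(hasFDerivAt_gaussianKernel _).fderiv, smul_apply, innerSL_apply_apply,
          map_smul, real_inner_comm v, inner_smul_right, inner_sub_right,
          smul_eq_mul, w]
        ring
    _ = -(R ^ 2)⁻¹ * (⟪v, x⟫ * smoothing gaussianKernel ν γ R (1 : E → ℝ) x -
          γ * ⟪v, smoothing gaussianKernel ν γ R id x⟫) := by
        rw [integral_const_mul, integral_sub (hw.const_mul _) (hwinner.const_mul _),
          integral_const_mul, integral_const_mul, integral_inner hwid]
        rfl
    _ = _ := by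
        simp only [inner_smul_right, inner_sub_right]
        ring

theorem contDiff_gradient_smoothing_gaussianKernel_one (hν : Integrable id ν) :
    ContDiff ℝ 1 (gradient (smoothing gaussianKernel ν γ R (1 : E → ℝ))) := by
  simp only [funext (gradient_smoothing_gaussianKernel_one hν)]
  exact ((contDiff_smoothing_gaussianKernel_one.smul contDiff_id).sub
    ((contDiff_smoothing_gaussianKernel_id hν).const_smul γ)).const_smul _

theorem sq_mul_divergence_gradient_smoothing_gaussianKernel_one (hν : Integrable id ν)
    (hR : R ≠ 0) (x : E) :
    R ^ 2 * divergence (gradient (smoothing gaussianKernel ν γ R (1 : E → ℝ))) x =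
      -(Module.finrank ℝ E * smoothing gaussianKernel ν γ R (1 : E → ℝ) x +
        fderiv ℝ (smoothing gaussianKernel ν γ R (1 : E → ℝ)) x x -
        γ * divergence (smoothing gaussianKernel ν γ R id) x) := by
  have hM : DifferentiableAt ℝ (smoothing gaussianKernel ν γ R (1 : E → ℝ)) x :=
    contDiff_smoothing_gaussianKernel_one.differentiable one_ne_zero x
  have hV : DifferentiableAt ℝ (smoothing gaussianKernel ν γ R id) x :=
    (contDiff_smoothing_gaussianKernel_id hν).differentiable one_ne_zero x
  have hMx := hM.fun_smul differentiableAt_fun_id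
  have hγV := hV.fun_const_smul γ
  rw [funext (gradient_smoothing_gaussianKernel_one hν),
    divergence_const_smul (hMx.fun_sub hγV), divergence_sub hMx hγV,
    divergence_smul_self hM, divergence_const_smul hV]
  field_simp

/-- Transport equation in the centre, heat equation in the width; the last term is absorbed by the
normalising constant. -/
theorem hasDerivWithinAt_smoothing_gaussianKernel_one {I : Set ℝ} {g r : ℝ → ℝ} {t g' r' : ℝ}
    (hν : Integrable id ν) (hg : HasDerivWithinAt g g' I t) (hr : HasDerivWithinAt r r' I t)
    (hr0 : r t ≠ 0) (x : E) :
    HasDerivWithinAt (fun τ => smoothing gaussianKernel ν (g τ) (r τ) (1 : E → ℝ) x)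
      (-g' * divergence (smoothing gaussianKernel ν (g t) (r t) id) x +
        r t * r' * divergence (gradient (smoothing gaussianKernel ν (g t) (r t) (1 : E → ℝ))) x +
        Module.finrank ℝ E * r' / r t * smoothing gaussianKernel ν (g t) (r t) (1 : E → ℝ) x)
      I t := by
  have hheat := sq_mul_divergence_gradient_smoothing_gaussianKernel_one (γ := g t) hν hr0 x
  refine (boundedC1_gaussianKernel.hasDerivWithinAt_smoothing_one hν hg hr hr0 x).congr_deriv ?_
  field_simp
  linear_combination -r' * hheat

end Gaussian

section Interpolant

variable {E : Type*} [NormedAddCommGroup E] [InnerProductSpace ℝ E] [MeasurableSpace E]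

/-- The density of `γ x' + R z`, where `x' ~ ν` and `z` is an independent standard Gaussian
vector of `E`. -/
noncomputable def interpolantDensity (ν : Measure E) (γ R : ℝ) (x : E) : ℝ :=
  (2 * π * R ^ 2) ^ (-(Module.finrank ℝ E : ℝ) / 2) * smoothing gaussianKernel ν γ R (1 : E → ℝ) x

/-- The conditional expectation of `x'` given `γ x' + R z = x`. -/
noncomputable def posteriorMean (ν : Measure E) (γ R : ℝ) (x : E) : E :=
  (smoothing gaussianKernel ν γ R (1 : E → ℝ) x)⁻¹ • smoothing gaussianKernel ν γ R id x

variable {ν : Measure E}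

theorem interpolantDensity_eq_integral_exp (ν : Measure E) (γ R : ℝ) (x : E) :
    interpolantDensity ν γ R x = (2 * π * R ^ 2) ^ (-(Module.finrank ℝ E : ℝ) / 2) *
      ∫ x', exp (-‖x - γ • x'‖ ^ 2 / (2 * R ^ 2)) ∂ν := by
  simp only [interpolantDensity, smoothing, gaussianKernel_inv_smul, Pi.one_apply, smul_eq_mul,
    mul_one]

theorem posteriorMean_eq_integral_exp (ν : Measure E) (γ R : ℝ) (x : E) :
    posteriorMean ν γ R x = (∫ x', exp (-‖x - γ • x'‖ ^ 2 / (2 * R ^ 2)) ∂ν)⁻¹ •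
      ∫ x', exp (-‖x - γ • x'‖ ^ 2 / (2 * R ^ 2)) • x' ∂ν := by
  simp only [posteriorMean, smoothing, gaussianKernel_inv_smul, Pi.one_apply, smul_eq_mul,
    mul_one, id_eq]

theorem contDiffOn_interpolantDensity [IsFiniteMeasure ν] {I : Set ℝ} {g r : ℝ → ℝ}
    (hν : Integrable id ν) (hg : ContDiffOn ℝ 1 g I) (hr : ContDiffOn ℝ 1 r I)
    (hr0 : ∀ t ∈ I, r t ≠ 0) (x : E) :
    ContDiffOn ℝ 1 (fun t => interpolantDensity ν (g t) (r t) x) I := by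
  have hne : ∀ t ∈ I, 2 * π * r t ^ 2 ≠ 0 := fun t ht =>
    mul_ne_zero two_pi_pos.ne' (pow_ne_zero 2 (hr0 t ht))
  exact ((contDiffOn_const.mul (hr.pow 2)).rpow_const_of_ne hne).mul
    (boundedC1_gaussianKernel.contDiffOn_smoothing_one hν hg hr hr0 x)

variable [FiniteDimensional ℝ E]

/-- The drift `ġ m - r ṙ s` at a time where `(g, r, ġ, ṙ) = (γ, R, γ', R')`; here `m` is the
posterior mean and `s` the score, that is, the gradient of the logarithm of the density. -/
noncomputable def interpolantDrift (ν : Measure E) (γ R γ' R' : ℝ) (x : E) : E :=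
  γ' • posteriorMean ν γ R x -
    (R * R') • gradient (fun y => log (interpolantDensity ν γ R y)) x

variable [BorelSpace E] [IsFiniteMeasure ν] {γ R γ' R' : ℝ}

theorem differentiable_interpolantDensity : Differentiable ℝ (interpolantDensity ν γ R) :=
  (contDiff_smoothing_gaussianKernel_one.differentiable one_ne_zero).const_mul _

theorem gradient_interpolantDensity (x : E) :
    gradient (interpolantDensity ν γ R) x = (2 * π * R ^ 2) ^ (-(Module.finrank ℝ E : ℝ) / 2) •
      gradient (smoothing gaussianKernel ν γ R (1 : E → ℝ)) x :=
  gradient_const_mul (contDiff_smoothing_gaussianKernel_one.differentiable one_ne_zero x) _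

theorem interpolantDensity_pos [NeZero ν] (hR : R ≠ 0) (x : E) : 0 < interpolantDensity ν γ R x :=
  mul_pos (rpow_pos_of_pos (by positivity) _) (smoothing_gaussianKernel_one_pos x)

theorem interpolantDensity_smul_posteriorMean [NeZero ν] (x : E) :
    interpolantDensity ν γ R x • posteriorMean ν γ R x =
      (2 * π * R ^ 2) ^ (-(Module.finrank ℝ E : ℝ) / 2) • smoothing gaussianKernel ν γ R id x := by
  rw [interpolantDensity, posteriorMean, mul_smul,
    smul_inv_smul₀ (smoothing_gaussianKernel_one_pos x).ne']

theorem interpolantDensity_smul_drift [NeZero ν] (hR : R ≠ 0) (x : E) :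
    interpolantDensity ν γ R x • interpolantDrift ν γ R γ' R' x =
      (2 * π * R ^ 2) ^ (-(Module.finrank ℝ E : ℝ) / 2) •
        (γ' • smoothing gaussianKernel ν γ R id x -
          (R * R') • gradient (smoothing gaussianKernel ν γ R (1 : E → ℝ)) x) := by
  rw [interpolantDrift, smul_sub, smul_comm, interpolantDensity_smul_posteriorMean,
    smul_comm _ (_ * _), smul_gradient_log (differentiable_interpolantDensity x)
      (interpolantDensity_pos hR x).ne', gradient_interpolantDensity, smul_sub, smul_comm γ',
    smul_comm (R * R')]

theorem contDiff_interpolantDensity_smul_drift [NeZero ν] (hν : Integrable id ν) (hR : R ≠ 0) :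
    ContDiff ℝ 1 (fun y => interpolantDensity ν γ R y • interpolantDrift ν γ R γ' R' y) := by
  simp only [interpolantDensity_smul_drift hR]
  exact (((contDiff_smoothing_gaussianKernel_id hν).const_smul _).sub
    ((contDiff_gradient_smoothing_gaussianKernel_one hν).const_smul _)).const_smul _

theorem divergence_interpolantDensity_smul_drift [NeZero ν] (hν : Integrable id ν) (hR : R ≠ 0)
    (x : E) :
    divergence (fun y => interpolantDensity ν γ R y • interpolantDrift ν γ R γ' R' y) x =
      (2 * π * R ^ 2) ^ (-(Module.finrank ℝ E : ℝ) / 2) *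
        (γ' * divergence (smoothing gaussianKernel ν γ R id) x -
          R * R' * divergence (gradient (smoothing gaussianKernel ν γ R (1 : E → ℝ))) x) := by
  have hV : DifferentiableAt ℝ (smoothing gaussianKernel ν γ R id) x :=
    (contDiff_smoothing_gaussianKernel_id hν).differentiable one_ne_zero x
  have hgrad : DifferentiableAt ℝ (gradient (smoothing gaussianKernel ν γ R (1 : E → ℝ))) x :=
    (contDiff_gradient_smoothing_gaussianKernel_one hν).differentiable one_ne_zero x
  have hγ'V := hV.fun_const_smul γ'
  have hRgrad := hgrad.fun_const_smul (R * R')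
  simp only [interpolantDensity_smul_drift hR]
  rw [divergence_const_smul (hγ'V.fun_sub hRgrad), divergence_sub hγ'V hRgrad,
    divergence_const_smul hV, divergence_const_smul hgrad]

theorem hasDerivWithinAt_interpolantDensity [NeZero ν] {I : Set ℝ} {g r : ℝ → ℝ} {t g' r' : ℝ}
    (hν : Integrable id ν) (hg : HasDerivWithinAt g g' I t) (hr : HasDerivWithinAt r r' I t)
    (hr0 : r t ≠ 0) (x : E) :
    HasDerivWithinAt (fun τ => interpolantDensity ν (g τ) (r τ) x)
      (-divergence (fun y => interpolantDensity ν (g t) (r t) y •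
        interpolantDrift ν (g t) (r t) g' r' y) x) I t := by
  refine ((hasDerivWithinAt_const_mul_sq_rpow _ two_pi_pos.ne' hr hr0).fun_mul
    (hasDerivWithinAt_smoothing_gaussianKernel_one hν hg hr hr0 x)).congr_deriv ?_
  rw [divergence_interpolantDensity_smul_drift hν hr0]
  ring

theorem stmt_5_general [NeZero ν] (hν : Integrable id ν) {I : Set ℝ} (hI : UniqueDiffOn ℝ I)
    {g r gdot rdot : ℝ → ℝ} (hg : ∀ t ∈ I, HasDerivWithinAt g (gdot t) I t)
    (hr : ∀ t ∈ I, HasDerivWithinAt r (rdot t) I t) (hgdot : ContinuousOn gdot I)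
    (hrdot : ContinuousOn rdot I) (hr0 : ∀ t ∈ I, r t ≠ 0) :
    (∀ x, ContDiffOn ℝ 1 (fun t => interpolantDensity ν (g t) (r t) x) I) ∧
    (∀ t ∈ I, ContDiff ℝ 1 (fun y => interpolantDensity ν (g t) (r t) y •
      interpolantDrift ν (g t) (r t) (gdot t) (rdot t) y)) ∧
    ∀ t ∈ I, ∀ x, derivWithin (fun τ => interpolantDensity ν (g τ) (r τ) x) I t +
      divergence (fun y => interpolantDensity ν (g t) (r t) y •
        interpolantDrift ν (g t) (r t) (gdot t) (rdot t) y) x = 0 := by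
  have hgC := contDiffOn_one_of_hasDerivWithinAt hI hg hgdot
  have hrC := contDiffOn_one_of_hasDerivWithinAt hI hr hrdot
  refine ⟨contDiffOn_interpolantDensity hν hgC hrC hr0,
    fun t ht => contDiff_interpolantDensity_smul_drift hν (hr0 t ht), fun t ht x => ?_⟩
  rw [(hasDerivWithinAt_interpolantDensity hν (hg t ht) (hr t ht) (hr0 t ht) x).derivWithin
    (hI t ht), neg_add_cancel]

end Interpolant

/-- the interpolant density satisfies the continuity equation
`∂_t ρ + div(bρ) = 0` with drift `b = ġ m − r ṙ s` (first assertion of Lemma 1). -/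
theorem stmt_5 {d : ℕ} (hd : 1 ≤ d) (T : ℝ) (hT : 0 < T)
    (ν : Measure (EuclideanSpace ℝ (Fin d))) [IsProbabilityMeasure ν]
    (hν : ∃ K : Set (EuclideanSpace ℝ (Fin d)), IsCompact K ∧ ν Kᶜ = 0)
    (g r gdot rdot : ℝ → ℝ)
    (hg : ∀ t ∈ Set.Icc (0 : ℝ) T, HasDerivWithinAt g (gdot t) (Set.Icc 0 T) t)
    (hr : ∀ t ∈ Set.Icc (0 : ℝ) T, HasDerivWithinAt r (rdot t) (Set.Icc 0 T) t)
    (hgdot : ContinuousOn gdot (Set.Icc 0 T)) (hrdot : ContinuousOn rdot (Set.Icc 0 T))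
    (hrpos : ∀ t ∈ Set.Icc (0 : ℝ) T, 0 < r t)
    (ρ : ℝ → EuclideanSpace ℝ (Fin d) → ℝ)
    (hρ : ∀ t x, ρ t x = (2 * π * r t ^ 2) ^ (-(d : ℝ) / 2) *
      ∫ x', exp (-‖x - g t • x'‖ ^ 2 / (2 * r t ^ 2)) ∂ν)
    (m : ℝ → EuclideanSpace ℝ (Fin d) → EuclideanSpace ℝ (Fin d))
    (hm : ∀ t x, m t x = (∫ x', exp (-‖x - g t • x'‖ ^ 2 / (2 * r t ^ 2)) ∂ν)⁻¹ •
      ∫ x', exp (-‖x - g t • x'‖ ^ 2 / (2 * r t ^ 2)) • x' ∂ν)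
    (s : ℝ → EuclideanSpace ℝ (Fin d) → EuclideanSpace ℝ (Fin d))
    (hs : ∀ t x, s t x = gradient (fun y => log (ρ t y)) x)
    (b : ℝ → EuclideanSpace ℝ (Fin d) → EuclideanSpace ℝ (Fin d))
    (hb : ∀ t x, b t x = gdot t • m t x - (r t * rdot t) • s t x) :
    (∀ x, ContDiffOn ℝ 1 (fun t => ρ t x) (Set.Icc 0 T)) ∧
    (∀ t ∈ Set.Icc (0 : ℝ) T, ContDiff ℝ 1 (fun y => ρ t y • b t y)) ∧
    (∀ t ∈ Set.Icc (0 : ℝ) T, ∀ x,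
      derivWithin (fun τ => ρ τ x) (Set.Icc 0 T) t +
        diverg (fun y => ρ t y • b t y) x = 0) := by
  obtain rfl : ρ = fun t => interpolantDensity ν (g t) (r t) := funext₂ fun t x => by
    rw [hρ, interpolantDensity_eq_integral_exp, finrank_euclideanSpace_fin]
  obtain rfl : m = fun t => posteriorMean ν (g t) (r t) := funext₂ fun t x => by
    rw [hm, posteriorMean_eq_integral_exp]
  obtain rfl : b = fun t => interpolantDrift ν (g t) (r t) (gdot t) (rdot t) :=
    funext₂ fun t x => by rw [hb, hs, interpolantDrift]
  simp only [diverg_eq_divergence]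
  exact stmt_5_general (integrable_of_continuous_of_compact_support hν continuous_id)
    (uniqueDiffOn_Icc hT) hg hr hgdot hrdot fun t ht => (hrpos t ht).ne'
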